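/- arXiv:2104.02779 — 9 statements merged into one kernel-verified Lean document; each statement's English description precedes it below -/
import Mathlib

section
/- Let p be a prime number. Equip the multiplicative group ℚ_pˣ of the field ℚ_p of p-adic numbers with a Haar measure μ normalized so that μ(ℤ_pˣ) = 1; write v for the normalized p-adic valuation (v(p) = 1), |·|_p for the normalized absolute value (|p|_p = 1/p), and χ(t) = (-1)^{v(t)} for t ∈ ℚ_pˣ. Let c, ζ, u₁, u₂ ∈ ℚ_pˣ with u₁·u₂ = ζ, and set N := v(ζ) - v(c) ∈ ℤ. Then for every s ∈ ℝ one has χ(u₁)·|u₁|_p^{-s} · ∫_{ℚ_pˣ} 1_{ℤ_p}(u₁·t⁻¹) · 1_{c·ℤ_p}(t·u₂) · |t|_p^{s} · χ(t) dμ(t) = ∑_{m=0}^{N} (-1)^m · p^{m·s}, where the right-hand sum is interpreted as 0 when N < 0. In particular the left-hand side depends only on ζ = u₁·u₂ and not on the choice of (u₁, u₂). -/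
open MeasureTheory

/-- The normalized non-archimedean local orbital integral (with transfer factor)
for the test function `φ'_c = 1_{ℤ_p × c·ℤ_p}` on `ℚ_p × ℚ_p`, defined using a Haar
measure `μ` on `ℚ_pˣ`.  Here `χ(t) = (-1)^{v(t)}` is the quadratic character of the
unramified quadratic extension of `ℚ_p`. -/
noncomputable def padicOrb (p : ℕ) [Fact p.Prime] [MeasurableSpace ℚ_[p]ˣ]
    (μ : Measure ℚ_[p]ˣ) (c u₁ u₂ : ℚ_[p]ˣ) (s : ℝ) : ℝ :=
  (-1 : ℝ) ^ ((u₁ : ℚ_[p]).valuation) * ‖(u₁ : ℚ_[p])‖ ^ (-s) *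
    ∫ t : ℚ_[p]ˣ,
      (Set.indicator {x : ℚ_[p] | ‖x‖ ≤ 1} (fun _ => (1 : ℝ)) ((u₁ : ℚ_[p]) * ((t : ℚ_[p]))⁻¹)) *
      (Set.indicator {y : ℚ_[p] | ‖y‖ ≤ ‖(c : ℚ_[p])‖} (fun _ => (1 : ℝ))
        ((t : ℚ_[p]) * (u₂ : ℚ_[p]))) *
      ‖(t : ℚ_[p])‖ ^ s * (-1 : ℝ) ^ ((t : ℚ_[p]).valuation) ∂μ

theorem Padic.setOf_units_valuation_eq (p : ℕ) [Fact p.Prime] (k : ℤ) :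
    {t : ℚ_[p]ˣ | (t : ℚ_[p]).valuation = k} =
      {t : ℚ_[p]ˣ | ‖(t : ℚ_[p])‖ = (p : ℝ) ^ (-k)} := by
  have hp : 1 < (p : ℝ) := by exact_mod_cast (Fact.out : p.Prime).one_lt
  ext t
  simp only [Set.mem_ofPred_eq, Padic.norm_eq_zpow_neg_valuation t.ne_zero]
  rw [zpow_right_inj₀ (by linarith) hp.ne', neg_inj]

theorem Padic.measurableSet_units_valuation_eq (p : ℕ) [Fact p.Prime]
    [MeasurableSpace ℚ_[p]ˣ] [BorelSpace ℚ_[p]ˣ] (k : ℤ) :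
    MeasurableSet {t : ℚ_[p]ˣ | (t : ℚ_[p]).valuation = k} := by
  rw [Padic.setOf_units_valuation_eq]
  exact (isClosed_eq (continuous_norm.comp Units.continuous_val) continuous_const).measurableSet

theorem Padic.measure_units_valuation_eq (p : ℕ) [Fact p.Prime]
    [MeasurableSpace ℚ_[p]ˣ] [BorelSpace ℚ_[p]ˣ]
    (μ : Measure ℚ_[p]ˣ) [μ.IsMulLeftInvariant] (k : ℤ) :
    μ {t : ℚ_[p]ˣ | (t : ℚ_[p]).valuation = k} =
      μ {t : ℚ_[p]ˣ | ‖(t : ℚ_[p])‖ = 1} := by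
  have hp : (p : ℚ_[p]) ≠ 0 := by exact_mod_cast (Fact.out : p.Prime).ne_zero
  have hp' : (p : ℝ) ≠ 0 := by exact_mod_cast (Fact.out : p.Prime).ne_zero
  rw [← measure_preimage_mul μ (Units.mk0 (p : ℚ_[p]) hp ^ k), Padic.setOf_units_valuation_eq]
  congr 1
  ext t
  simp only [Set.mem_preimage, Set.mem_ofPred_eq, Units.val_mul, Units.val_zpow_eq_zpow_val,
    Units.val_mk0, norm_mul, Padic.norm_p_zpow]
  exact mul_eq_left₀ (zpow_ne_zero _ hp')

/-- The integrand of `padicOrb`, together with its transfer factor, is a finite combination of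
indicators of the sets of constant valuation. -/
theorem padicOrb_integrand_eq_sum (p : ℕ) [Fact p.Prime] (c u₁ u₂ t : ℚ_[p]ˣ) (s : ℝ) :
    (-1 : ℝ) ^ ((u₁ : ℚ_[p]).valuation) * ‖(u₁ : ℚ_[p])‖ ^ (-s) *
      ((Set.indicator {x : ℚ_[p] | ‖x‖ ≤ 1} (fun _ => (1 : ℝ))
          ((u₁ : ℚ_[p]) * ((t : ℚ_[p]))⁻¹)) *
        (Set.indicator {y : ℚ_[p] | ‖y‖ ≤ ‖(c : ℚ_[p])‖} (fun _ => (1 : ℝ))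
          ((t : ℚ_[p]) * (u₂ : ℚ_[p]))) *
        ‖(t : ℚ_[p])‖ ^ s * (-1 : ℝ) ^ ((t : ℚ_[p]).valuation)) =
    ∑ m ∈ Finset.range
        ((u₁ : ℚ_[p]).valuation + (u₂ : ℚ_[p]).valuation - (c : ℚ_[p]).valuation + 1).toNat,
      Set.indicator {t : ℚ_[p]ˣ | (t : ℚ_[p]).valuation = (u₁ : ℚ_[p]).valuation - m}
        (fun _ => (-1 : ℝ) ^ m * (p : ℝ) ^ ((m : ℝ) * s)) t := by
  have hp : 1 < (p : ℝ) := by exact_mod_cast (Fact.out : p.Prime).one_lt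
  have hp0 : 0 < (p : ℝ) := by linarith
  have hleft : (u₁ : ℚ_[p]) * (t : ℚ_[p])⁻¹ ∈ {x : ℚ_[p] | ‖x‖ ≤ 1} ↔
      (t : ℚ_[p]).valuation ≤ (u₁ : ℚ_[p]).valuation := by
    rw [Set.mem_ofPred_eq, norm_mul, norm_inv, ← div_eq_mul_inv,
      div_le_one (norm_pos_iff.2 t.ne_zero), Padic.norm_eq_zpow_neg_valuation t.ne_zero,
      Padic.norm_eq_zpow_neg_valuation u₁.ne_zero, zpow_le_zpow_iff_right₀ hp, neg_le_neg_iff]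
  have hright : (t : ℚ_[p]) * (u₂ : ℚ_[p]) ∈ {y : ℚ_[p] | ‖y‖ ≤ ‖(c : ℚ_[p])‖} ↔
      (c : ℚ_[p]).valuation ≤ (t : ℚ_[p]).valuation + (u₂ : ℚ_[p]).valuation := by
    rw [Set.mem_ofPred_eq, ← Units.val_mul, Padic.norm_eq_zpow_neg_valuation (t * u₂).ne_zero,
      Padic.norm_eq_zpow_neg_valuation c.ne_zero, zpow_le_zpow_iff_right₀ hp, neg_le_neg_iff,
      Units.val_mul, Padic.valuation_mul t.ne_zero u₂.ne_zero]
  simp only [Set.indicator_apply, hleft, hright, Padic.norm_eq_zpow_neg_valuation t.ne_zero,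
    Padic.norm_eq_zpow_neg_valuation u₁.ne_zero, Set.mem_ofPred_eq]
  by_cases h : (t : ℚ_[p]).valuation ≤ (u₁ : ℚ_[p]).valuation ∧
      (c : ℚ_[p]).valuation ≤ (t : ℚ_[p]).valuation + (u₂ : ℚ_[p]).valuation
  · obtain ⟨hka, hdk⟩ := h
    obtain ⟨n, hn⟩ : ∃ n : ℕ, (t : ℚ_[p]).valuation = (u₁ : ℚ_[p]).valuation - n :=
      ⟨((u₁ : ℚ_[p]).valuation - (t : ℚ_[p]).valuation).toNat, by omega⟩
    rw [Finset.sum_eq_single n (fun m _ hm => if_neg (by omega))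
      (fun hn => absurd (Finset.mem_range.2 (by omega)) hn), if_pos hka, if_pos hdk, if_pos hn,
      one_mul, one_mul, hn]
    generalize (u₁ : ℚ_[p]).valuation = a
    have hsign : (-1 : ℝ) ^ a * (-1 : ℝ) ^ (a - (n : ℤ)) = (-1 : ℝ) ^ n := by
      rw [zpow_sub₀ (by norm_num), ← mul_div_assoc, ← mul_zpow]
      norm_num
      rw [← inv_pow]
      norm_num
    have hpow : ((p : ℝ) ^ (-a)) ^ (-s) * ((p : ℝ) ^ (-(a - (n : ℤ)))) ^ s =
        (p : ℝ) ^ ((n : ℝ) * s) := by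
      rw [← Real.rpow_intCast, ← Real.rpow_intCast, ← Real.rpow_mul hp0.le,
        ← Real.rpow_mul hp0.le, ← Real.rpow_add hp0]
      congr 1
      push_cast
      ring
    rw [← hsign, ← hpow]
    ring
  · rw [Finset.sum_eq_zero]
    · rcases not_and_or.1 h with h | h <;> simp [h]
    · intro m hm
      rw [Finset.mem_range] at hm
      exact if_neg (by omega)

/-- For any Haar measure on `ℚ_pˣ` normalized by `μ(ℤ_pˣ) = 1`, the normalized local
orbital integral of `φ'_c = 1_{ℤ_p × c·ℤ_p}` equals the alternating sum
`∑_{m=0}^{N} (-1)^m p^{ms}` with `N = v(ζ) - v(c)` (the empty sum if `N < 0`);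
in particular it depends only on `ζ = u₁u₂`. -/
theorem stmt1 (p : ℕ) [Fact p.Prime]
    [MeasurableSpace ℚ_[p]ˣ] [BorelSpace ℚ_[p]ˣ]
    (μ : Measure ℚ_[p]ˣ) [μ.IsHaarMeasure]
    (hμ : μ {t : ℚ_[p]ˣ | ‖(t : ℚ_[p])‖ = 1} = 1)
    (c ζ u₁ u₂ : ℚ_[p]ˣ) (hu : u₁ * u₂ = ζ) (s : ℝ) :
    padicOrb p μ c u₁ u₂ s
      = ∑ m ∈ Finset.range ((ζ : ℚ_[p]).valuation - (c : ℚ_[p]).valuation + 1).toNat,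
          (-1 : ℝ) ^ m * (p : ℝ) ^ ((m : ℝ) * s) := by
  have hμ' (k : ℤ) : μ {t : ℚ_[p]ˣ | (t : ℚ_[p]).valuation = k} = 1 :=
    (Padic.measure_units_valuation_eq p μ k).trans hμ
  rw [padicOrb, ← integral_const_mul]
  simp only [padicOrb_integrand_eq_sum]
  rw [integral_finsetSum, ← hu, Units.val_mul, Padic.valuation_mul u₁.ne_zero u₂.ne_zero]
  · refine Finset.sum_congr rfl fun m _ => ?_
    rw [integral_indicator_const _ (Padic.measurableSet_units_valuation_eq p _),
      measureReal_def, hμ']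
    simp
  · intro m _
    refine (integrable_indicator_iff (Padic.measurableSet_units_valuation_eq p _)).2 ?_
    exact integrableOn_const (by simp [hμ'])
end

section
/- Let p be a prime number, μ the Haar measure on ℚ_pˣ with μ(ℤ_pˣ) = 1, v the normalized p-adic valuation, |·|_p the normalized absolute value, and χ(t) = (-1)^{v(t)}. Let c, ζ, u₁, u₂ ∈ ℚ_pˣ with u₁·u₂ = ζ, and define Orb(ζ, φ'_c, s) := χ(u₁)·|u₁|_p^{-s} · ∫_{ℚ_pˣ} 1_{ℤ_p}(u₁·t⁻¹) · 1_{c·ℤ_p}(t·u₂) · |t|_p^{s} · χ(t) dμ(t) for s ∈ ℝ. If v(ζ) - v(c) is odd, then s ↦ Orb(ζ, φ'_c, s) is differentiable at s = 0 with derivative ∂Orb(ζ, φ'_c) = -max{0, (1 + v(c⁻¹·ζ))/2} · log p. -/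
open MeasureTheory

/-- The units of `ℚ_[p]` of valuation `n` form a set of the same Haar measure as `ℤ_pˣ`. -/
theorem measure_setOf_valuation_eq (p : ℕ) [Fact p.Prime]
    [MeasurableSpace ℚ_[p]ˣ] [BorelSpace ℚ_[p]ˣ]
    (μ : Measure ℚ_[p]ˣ) [μ.IsMulLeftInvariant] (n : ℤ) :
    μ {t : ℚ_[p]ˣ | (t : ℚ_[p]).valuation = n} = μ {t : ℚ_[p]ˣ | ‖(t : ℚ_[p])‖ = 1} := by
  have hp : (1 : ℝ) < p := by exact_mod_cast (Fact.out : p.Prime).one_lt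
  have hp0 : (p : ℚ_[p]) ≠ 0 := by exact_mod_cast (Fact.out : p.Prime).ne_zero
  rw [← measure_preimage_mul μ (Units.mk0 (p : ℚ_[p]) hp0 ^ (-n)) {t | ‖(t : ℚ_[p])‖ = 1}]
  congr 1
  ext t
  simp only [Set.mem_ofPred_eq, Set.mem_preimage, Units.val_mul, Units.val_zpow_eq_zpow_val,
    Units.val_mk0, norm_mul, Padic.norm_p_zpow, neg_neg,
    Padic.norm_eq_zpow_neg_valuation t.ne_zero]
  rw [← zpow_add₀ (by positivity), zpow_eq_one_iff_right₀ (by positivity) hp.ne']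
  omega

theorem measurableSet_setOf_valuation_eq (p : ℕ) [Fact p.Prime]
    [MeasurableSpace ℚ_[p]ˣ] [BorelSpace ℚ_[p]ˣ] (n : ℤ) :
    MeasurableSet {t : ℚ_[p]ˣ | (t : ℚ_[p]).valuation = n} := by
  have hp : (1 : ℝ) < p := by exact_mod_cast (Fact.out : p.Prime).one_lt
  have h : {t : ℚ_[p]ˣ | (t : ℚ_[p]).valuation = n} =
      {t : ℚ_[p]ˣ | ‖(t : ℚ_[p])‖ = (p : ℝ) ^ (-n)} := by
    ext t
    simp only [Set.mem_ofPred_eq, Padic.norm_eq_zpow_neg_valuation t.ne_zero]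
    rw [zpow_right_inj₀ (by positivity) hp.ne', neg_inj]
  rw [h]
  exact (isClosed_eq (continuous_norm.comp Units.continuous_val) continuous_const).measurableSet

/-- The orbital integral is the alternating sum `∑ (-1)^k p^{ks}` over
`0 ≤ k ≤ v(u₁) + v(u₂) - v(c)`. -/
theorem padicOrb_eq_sum (p : ℕ) [Fact p.Prime]
    [MeasurableSpace ℚ_[p]ˣ] [BorelSpace ℚ_[p]ˣ]
    (μ : Measure ℚ_[p]ˣ) [μ.IsMulLeftInvariant]
    (hμ : μ {t : ℚ_[p]ˣ | ‖(t : ℚ_[p])‖ = 1} = 1) (c u₁ u₂ : ℚ_[p]ˣ) (s : ℝ) :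
    padicOrb p μ c u₁ u₂ s =
      ∑ k ∈ Finset.range (((u₁ : ℚ_[p]).valuation + (u₂ : ℚ_[p]).valuation
        - (c : ℚ_[p]).valuation + 1).toNat), (-1 : ℝ) ^ k * (p : ℝ) ^ (k * s) := by
  have hp : (1 : ℝ) < p := by exact_mod_cast (Fact.out : p.Prime).one_lt
  have hp0 : (0 : ℝ) < p := by positivity
  have hnorm (t : ℚ_[p]ˣ) (r : ℝ) :
      ‖(t : ℚ_[p])‖ ^ r = (p : ℝ) ^ (-((t : ℚ_[p]).valuation : ℝ) * r) := by
    rw [Padic.norm_eq_zpow_neg_valuation t.ne_zero, ← Real.rpow_intCast, ← Real.rpow_mul hp0.le]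
    push_cast
    rfl
  have hfirst (t : ℚ_[p]ˣ) : ‖(u₁ : ℚ_[p]) * (t : ℚ_[p])⁻¹‖ ≤ 1 ↔
      (t : ℚ_[p]).valuation ≤ (u₁ : ℚ_[p]).valuation := by
    rw [norm_mul, norm_inv, Padic.norm_eq_zpow_neg_valuation t.ne_zero,
      Padic.norm_eq_zpow_neg_valuation u₁.ne_zero, ← zpow_neg, ← zpow_add₀ hp0.ne',
      zpow_le_one_iff_right₀ hp]
    omega
  have hsecond (t : ℚ_[p]ˣ) : ‖(t : ℚ_[p]) * (u₂ : ℚ_[p])‖ ≤ ‖(c : ℚ_[p])‖ ↔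
      (c : ℚ_[p]).valuation ≤ (t : ℚ_[p]).valuation + (u₂ : ℚ_[p]).valuation := by
    rw [norm_mul, Padic.norm_eq_zpow_neg_valuation t.ne_zero,
      Padic.norm_eq_zpow_neg_valuation u₂.ne_zero, Padic.norm_eq_zpow_neg_valuation c.ne_zero,
      ← zpow_add₀ hp0.ne', zpow_le_zpow_iff_right₀ hp]
    omega
  unfold padicOrb
  simp only [hnorm, Set.indicator_apply, Set.mem_ofPred_eq, hfirst, hsecond]
  set a := (u₁ : ℚ_[p]).valuation
  set b := (u₂ : ℚ_[p]).valuation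
  set d := (c : ℚ_[p]).valuation
  have hshell (n : ℤ) : μ {t : ℚ_[p]ˣ | (t : ℚ_[p]).valuation = n} = 1 := by
    rw [measure_setOf_valuation_eq, hμ]
  have hintegrand (t : ℚ_[p]ˣ) :
      (if (t : ℚ_[p]).valuation ≤ a then (1 : ℝ) else 0) *
        (if d ≤ (t : ℚ_[p]).valuation + b then 1 else 0) *
        (p : ℝ) ^ (-((t : ℚ_[p]).valuation : ℝ) * s) * (-1) ^ (t : ℚ_[p]).valuation =
      ∑ k ∈ Finset.range (a + b - d + 1).toNat,
        Set.indicator {t : ℚ_[p]ˣ | (t : ℚ_[p]).valuation = a - k}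
          (fun _ => (p : ℝ) ^ (-((a : ℝ) - k) * s) * (-1) ^ (a - k)) t := by
    simp only [Set.indicator_apply, Set.mem_ofPred_eq]
    obtain ⟨n, hn⟩ : ∃ n, (t : ℚ_[p]).valuation = n := ⟨_, rfl⟩
    simp only [hn]
    by_cases h : n ≤ a ∧ d ≤ n + b
    · obtain ⟨k, hk⟩ := Int.eq_ofNat_of_zero_le (sub_nonneg.2 h.1)
      obtain rfl : n = a - k := by omega
      rw [Finset.sum_eq_single k]
      · simp [h.2]
      · intro j _ hj
        rw [if_neg (by omega)]
      · intro hk'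
        rw [Finset.mem_range] at hk'
        omega
    · rw [Finset.sum_eq_zero]
      · rcases not_and_or.1 h with h | h <;> simp [h]
      · intro k hk
        rw [Finset.mem_range] at hk
        rw [if_neg (by omega)]
  simp only [hintegrand]
  rw [integral_finsetSum, Finset.mul_sum]
  · refine Finset.sum_congr rfl fun k _ => ?_
    rw [integral_indicator_const _ (measurableSet_setOf_valuation_eq p _), measureReal_def, hshell,
      ENNReal.toReal_one, one_smul]
    have hsign : (-1 : ℝ) ^ a * (-1) ^ (a - k) = (-1) ^ k := by
      rw [zpow_sub₀ (by norm_num), zpow_natCast, mul_div_assoc', ← mul_zpow]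
      rcases neg_one_pow_eq_or ℝ k with h | h <;> simp [h]
    have hpow : (p : ℝ) ^ (-(a : ℝ) * -s) * (p : ℝ) ^ (-((a : ℝ) - k) * s) =
        (p : ℝ) ^ (k * s) := by
      rw [← Real.rpow_add hp0]
      ring_nf
    rw [← hsign, ← hpow]
    ring
  · intro k _
    rw [integrable_indicator_iff (measurableSet_setOf_valuation_eq p _)]
    exact integrableOn_const (by simp [hshell])

theorem sum_range_two_mul_neg_one_pow_mul (n : ℕ) :
    ∑ k ∈ Finset.range (2 * n), (-1 : ℝ) ^ k * k = -n := by
  induction n with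
  | zero => simp
  | succ n ih =>
    rw [mul_add, mul_one, Finset.sum_range_succ, Finset.sum_range_succ, ih]
    simp [pow_succ, pow_mul]
    ring

/-- When `v(ζ) - v(c)` is odd, the normalized local orbital integral for
`φ'_c = 1_{ℤ_p × c·ℤ_p}` is differentiable at `s = 0` with derivative
`∂Orb(ζ, φ'_c) = -max{0, (1 + v(c⁻¹ζ))/2} · log p`. -/
theorem stmt3 (p : ℕ) [Fact p.Prime]
    [MeasurableSpace ℚ_[p]ˣ] [BorelSpace ℚ_[p]ˣ]
    (μ : Measure ℚ_[p]ˣ) [μ.IsHaarMeasure]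
    (hμ : μ {t : ℚ_[p]ˣ | ‖(t : ℚ_[p])‖ = 1} = 1)
    (c ζ u₁ u₂ : ℚ_[p]ˣ) (hu : u₁ * u₂ = ζ)
    (hodd : Odd ((ζ : ℚ_[p]).valuation - (c : ℚ_[p]).valuation)) :
    HasDerivAt (fun s : ℝ => padicOrb p μ c u₁ u₂ s)
      (-(max 0 ((1 + ((((c⁻¹ * ζ : ℚ_[p]ˣ) : ℚ_[p]).valuation : ℝ)) ) / 2)) * Real.log p)
      0 := by
  have hp0 : (0 : ℝ) < p := by exact_mod_cast (Fact.out : p.Prime).pos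
  have hval : ((c⁻¹ * ζ : ℚ_[p]ˣ) : ℚ_[p]).valuation =
      (ζ : ℚ_[p]).valuation - (c : ℚ_[p]).valuation := by
    rw [Units.val_mul, Padic.valuation_mul (c⁻¹).ne_zero ζ.ne_zero, Units.val_inv_eq_inv_val,
      Padic.valuation_inv]
    ring
  have hζ : (ζ : ℚ_[p]).valuation = (u₁ : ℚ_[p]).valuation + (u₂ : ℚ_[p]).valuation := by
    rw [← hu, Units.val_mul, Padic.valuation_mul u₁.ne_zero u₂.ne_zero]
  obtain ⟨j, hj⟩ := hodd
  have hlen : ((u₁ : ℚ_[p]).valuation + (u₂ : ℚ_[p]).valuation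
      - (c : ℚ_[p]).valuation + 1).toNat = 2 * (j + 1).toNat := by omega
  have hmax : max 0 ((1 + (((c⁻¹ * ζ : ℚ_[p]ˣ) : ℚ_[p]).valuation : ℝ)) / 2) =
      ((j + 1).toNat : ℝ) := by
    have hcast : ((j + 1).toNat : ℝ) = ((max (j + 1) 0 : ℤ) : ℝ) := by
      rw [← Int.toNat_eq_max, Int.cast_natCast]
    rw [hval, hj, hcast, max_comm]
    push_cast
    ring_nf
  simp only [padicOrb_eq_sum p μ hμ, hlen]
  rw [hmax, ← sum_range_two_mul_neg_one_pow_mul, Finset.sum_mul]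
  refine HasDerivAt.fun_sum fun k _ => ?_
  have h := (((hasDerivAt_id (0 : ℝ)).const_mul (k : ℝ)).const_rpow hp0).const_mul ((-1 : ℝ) ^ k)
  refine h.congr_deriv ?_
  simp
  ring
end

section
/- Define φ' : ℝ × ℝ → ℝ by φ'(x, y) = ((x + y)/2)·e^{-π(x² + y²)}. Let ζ ∈ ℝ with ζ ≠ 0 and choose u₁, u₂ ∈ ℝ, both nonzero, with u₁·u₂ = ζ. For s ∈ ℝ define Orb(ζ, φ', s) := sgn(u₁)·|u₁|^{-s} · ∫_{ℝ∖{0}} φ'(u₁·t⁻¹, t·u₂) · |t|^{s-1} · sgn(t) dt, the integral taken with respect to Lebesgue measure (this is the integral over ℝˣ against the multiplicative Haar measure dt/|t|, twisted by the sign character). Then Orb(ζ, φ', 0) = e^{-2πζ} if ζ > 0, and Orb(ζ, φ', 0) = 0 if ζ < 0; in particular the value is independent of the choice of (u₁, u₂) with u₁u₂ = ζ. -/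
open MeasureTheory

/-- The archimedean Gaussian test function `φ'(x,y) = ((x+y)/2)·e^{-π(x²+y²)}`
on the split quadratic space `ℝ × ℝ`. -/
noncomputable def gaussianTestFn (x y : ℝ) : ℝ :=
  ((x + y) / 2) * Real.exp (-(Real.pi * (x ^ 2 + y ^ 2)))

/-- The normalized archimedean local orbital integral (with transfer factor
`sgn(u₁)·|u₁|^{-s}`), evaluated at the identity of `SL₂(ℝ)`: the integral over
`ℝ∖{0}` against the multiplicative Haar measure `dt/|t|` twisted by the sign
character, written with respect to Lebesgue measure. -/
noncomputable def archOrb (u₁ u₂ s : ℝ) : ℝ :=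
  Real.sign u₁ * |u₁| ^ (-s) *
    ∫ t in ({0}ᶜ : Set ℝ),
      gaussianTestFn (u₁ * t⁻¹) (t * u₂) * |t| ^ (s - 1) * Real.sign t

open Set Filter Topology

theorem update_eventuallyEq_of_ne {f : ℝ → ℝ} {a x m : ℝ} (hx : x ≠ a) :
    Function.update f a m =ᶠ[𝓝 x] f := by
  filter_upwards [isOpen_ne.mem_nhds hx] with y hy using Function.update_of_ne hy _ _

theorem tendsto_update_atTop {f : ℝ → ℝ} {a m l : ℝ} (hf : Tendsto f atTop (𝓝 l)) :
    Tendsto (Function.update f a m) atTop (𝓝 l) := by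
  refine hf.congr' ?_
  filter_upwards [eventually_gt_atTop a] with x hx using (Function.update_of_ne hx.ne' _ _).symm

theorem continuousWithinAt_update_Ici {f : ℝ → ℝ} {a m : ℝ} (hf : Tendsto f (𝓝[>] a) (𝓝 m)) :
    ContinuousWithinAt (Function.update f a m) (Ici a) a := by
  rwa [continuousWithinAt_update_same, Ici_sdiff_left]

theorem integrableOn_Ioi_of_hasDerivAt_of_nonneg_of_tendsto {f f' : ℝ → ℝ} {a m l : ℝ}
    (hderiv : ∀ x ∈ Ioi a, HasDerivAt f (f' x) x) (hf' : ∀ x ∈ Ioi a, 0 ≤ f' x)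
    (hm : Tendsto f (𝓝[>] a) (𝓝 m)) (hl : Tendsto f atTop (𝓝 l)) :
    IntegrableOn f' (Ioi a) :=
  integrableOn_Ioi_deriv_of_nonneg (continuousWithinAt_update_Ici hm)
    (fun x hx => (hderiv x hx).congr_of_eventuallyEq (update_eventuallyEq_of_ne (ne_of_gt hx)))
    hf' (tendsto_update_atTop hl)

theorem integral_Ioi_of_hasDerivAt_of_tendsto_nhdsGT {f f' : ℝ → ℝ} {a m l : ℝ}
    (hderiv : ∀ x ∈ Ioi a, HasDerivAt f (f' x) x) (hf' : IntegrableOn f' (Ioi a))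
    (hm : Tendsto f (𝓝[>] a) (𝓝 m)) (hl : Tendsto f atTop (𝓝 l)) :
    ∫ x in Ioi a, f' x = l - m := by
  rw [integral_Ioi_of_hasDerivAt_of_tendsto (continuousWithinAt_update_Ici hm)
    (fun x hx => (hderiv x hx).congr_of_eventuallyEq (update_eventuallyEq_of_ne (ne_of_gt hx)))
    hf' (tendsto_update_atTop hl), Function.update_self]

/-- The odd primitive of the Gaussian `x ↦ e^{-πx²}`. -/
noncomputable def gaussianPrimitive (x : ℝ) : ℝ :=
  ∫ y in (0 : ℝ)..x, Real.exp (-Real.pi * y ^ 2)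

theorem hasDerivAt_gaussianPrimitive (x : ℝ) :
    HasDerivAt gaussianPrimitive (Real.exp (-Real.pi * x ^ 2)) x :=
  (by fun_prop : Continuous fun y : ℝ => Real.exp (-Real.pi * y ^ 2)).integral_hasStrictDerivAt
    0 x |>.hasDerivAt

theorem gaussianPrimitive_neg (x : ℝ) : gaussianPrimitive (-x) = -gaussianPrimitive x := by
  have h := intervalIntegral.integral_comp_neg (a := 0) (b := x)
    fun y : ℝ => Real.exp (-Real.pi * y ^ 2)
  simp only [neg_sq, neg_zero] at h
  rw [gaussianPrimitive, intervalIntegral.integral_symm, ← h, gaussianPrimitive]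

theorem tendsto_gaussianPrimitive_atTop :
    Tendsto gaussianPrimitive atTop (𝓝 (1 / 2)) := by
  have h := intervalIntegral_tendsto_integral_Ioi (0 : ℝ)
    (integrable_exp_neg_mul_sq Real.pi_pos).integrableOn tendsto_id
  rw [integral_gaussian_Ioi, div_self Real.pi_ne_zero, Real.sqrt_one] at h
  exact h

theorem tendsto_gaussianPrimitive_atBot :
    Tendsto gaussianPrimitive atBot (𝓝 (-(1 / 2))) := by
  refine (tendsto_gaussianPrimitive_atTop.comp tendsto_neg_atBot_atTop).neg.congr fun x => ?_
  simp [gaussianPrimitive_neg]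

/-- The half-line integrand of the orbital integral at `s = 0`. -/
noncomputable def orbIntegrand (u₁ u₂ t : ℝ) : ℝ :=
  (u₁ / t ^ 2 + u₂) / 2 * Real.exp (-(Real.pi * ((u₁ / t) ^ 2 + (t * u₂) ^ 2)))

theorem orbIntegrand_neg (u₁ u₂ t : ℝ) :
    orbIntegrand (-u₁) (-u₂) t = -orbIntegrand u₁ u₂ t := by
  simp only [orbIntegrand, neg_div, mul_neg, neg_sq]
  ring

theorem hasDerivAt_orbIntegrand_primitive (u₁ u₂ : ℝ) {t : ℝ} (ht : t ≠ 0) :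
    HasDerivAt
      (fun t => Real.exp (-(2 * Real.pi * (u₁ * u₂))) / 2 * gaussianPrimitive (u₂ * t - u₁ / t))
      (orbIntegrand u₁ u₂ t) t := by
  have hw : HasDerivAt (fun t => u₂ * t - u₁ / t) (u₁ / t ^ 2 + u₂) t := by
    refine (((hasDerivAt_id t).const_mul u₂).sub
      ((hasDerivAt_inv ht).const_mul u₁)).congr_deriv ?_
    ring
  refine (((hasDerivAt_gaussianPrimitive _).comp t hw).const_mul
    (Real.exp (-(2 * Real.pi * (u₁ * u₂))) / 2)).congr_deriv ?_
  have he : -(Real.pi * ((u₁ / t) ^ 2 + (t * u₂) ^ 2))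
      = -(2 * Real.pi * (u₁ * u₂)) + -Real.pi * (u₂ * t - u₁ / t) ^ 2 := by
    field_simp
    ring
  rw [orbIntegrand, he, Real.exp_add]
  ring

theorem tendsto_mul_sub_div_atTop (u₁ : ℝ) {u₂ : ℝ} (hu₂ : 0 < u₂) :
    Tendsto (fun t => u₂ * t - u₁ / t) atTop atTop := by
  have h : Tendsto (fun t : ℝ => -(u₁ / t)) atTop (𝓝 (-0)) :=
    (tendsto_id.const_div_atTop u₁).neg
  exact (tendsto_id.const_mul_atTop hu₂).atTop_add h

theorem tendsto_mul_nhdsGT_zero (u₂ : ℝ) : Tendsto (fun t => u₂ * t) (𝓝[>] 0) (𝓝 0) := by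
  have h : Continuous fun t : ℝ => u₂ * t := by fun_prop
  simpa using (h.tendsto 0).mono_left nhdsWithin_le_nhds

theorem tendsto_mul_sub_div_nhdsGT_zero_of_pos {u₁ : ℝ} (hu₁ : 0 < u₁) (u₂ : ℝ) :
    Tendsto (fun t => u₂ * t - u₁ / t) (𝓝[>] 0) atBot :=
  (tendsto_mul_nhdsGT_zero u₂).add_atBot
    (tendsto_neg_atTop_atBot.comp (tendsto_inv_nhdsGT_zero.const_mul_atTop hu₁))

theorem tendsto_mul_sub_div_nhdsGT_zero_of_neg {u₁ : ℝ} (hu₁ : u₁ < 0) (u₂ : ℝ) :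
    Tendsto (fun t => u₂ * t - u₁ / t) (𝓝[>] 0) atTop :=
  (tendsto_mul_nhdsGT_zero u₂).add_atTop
    (tendsto_neg_atBot_atTop.comp (tendsto_inv_nhdsGT_zero.const_mul_atTop_of_neg hu₁))

theorem integrableOn_orbIntegrand_of_pos {u₁ u₂ : ℝ} (hu₁ : 0 < u₁) (hu₂ : 0 < u₂) :
    IntegrableOn (orbIntegrand u₁ u₂) (Ioi 0) :=
  integrableOn_Ioi_of_hasDerivAt_of_nonneg_of_tendsto
    (fun t ht => hasDerivAt_orbIntegrand_primitive u₁ u₂ (ne_of_gt ht))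
    (fun t _ => by unfold orbIntegrand; positivity)
    ((tendsto_gaussianPrimitive_atBot.comp
      (tendsto_mul_sub_div_nhdsGT_zero_of_pos hu₁ u₂)).const_mul _)
    ((tendsto_gaussianPrimitive_atTop.comp (tendsto_mul_sub_div_atTop u₁ hu₂)).const_mul _)

theorem integrableOn_orbIntegrand {u₁ u₂ : ℝ} (hu₁ : u₁ ≠ 0) (hu₂ : u₂ ≠ 0) :
    IntegrableOn (orbIntegrand u₁ u₂) (Ioi 0) := by
  refine (integrableOn_orbIntegrand_of_pos (abs_pos.2 hu₁) (abs_pos.2 hu₂)).mono' ?_ ?_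
  · unfold orbIntegrand
    exact Measurable.aestronglyMeasurable (by fun_prop)
  · refine Eventually.of_forall fun t => ?_
    simp only [orbIntegrand, norm_mul, Real.norm_eq_abs, Real.abs_exp, div_pow, mul_pow, sq_abs,
      abs_div, abs_two]
    gcongr
    refine (abs_add_le _ _).trans_eq ?_
    rw [abs_div, abs_of_nonneg (sq_nonneg t)]

theorem integral_orbIntegrand_of_pos {u₁ u₂ : ℝ} (hu₁ : 0 < u₁) (hu₂ : 0 < u₂) :
    ∫ t in Ioi 0, orbIntegrand u₁ u₂ t = Real.exp (-(2 * Real.pi * (u₁ * u₂))) / 2 := by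
  rw [integral_Ioi_of_hasDerivAt_of_tendsto_nhdsGT
    (fun t ht => hasDerivAt_orbIntegrand_primitive u₁ u₂ (ne_of_gt ht))
    (integrableOn_orbIntegrand hu₁.ne' hu₂.ne')
    ((tendsto_gaussianPrimitive_atBot.comp
      (tendsto_mul_sub_div_nhdsGT_zero_of_pos hu₁ u₂)).const_mul _)
    ((tendsto_gaussianPrimitive_atTop.comp (tendsto_mul_sub_div_atTop u₁ hu₂)).const_mul _)]
  ring

theorem integral_orbIntegrand_of_neg_of_pos {u₁ u₂ : ℝ} (hu₁ : u₁ < 0) (hu₂ : 0 < u₂) :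
    ∫ t in Ioi 0, orbIntegrand u₁ u₂ t = 0 := by
  rw [integral_Ioi_of_hasDerivAt_of_tendsto_nhdsGT
    (fun t ht => hasDerivAt_orbIntegrand_primitive u₁ u₂ (ne_of_gt ht))
    (integrableOn_orbIntegrand hu₁.ne hu₂.ne')
    ((tendsto_gaussianPrimitive_atTop.comp
      (tendsto_mul_sub_div_nhdsGT_zero_of_neg hu₁ u₂)).const_mul _)
    ((tendsto_gaussianPrimitive_atTop.comp (tendsto_mul_sub_div_atTop u₁ hu₂)).const_mul _), sub_self]

theorem archOrb_zero (u₁ u₂ : ℝ) :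
    archOrb u₁ u₂ 0 = Real.sign u₁ * (2 * ∫ t in Ioi 0, orbIntegrand u₁ u₂ t) := by
  rw [archOrb, neg_zero, Real.rpow_zero, mul_one, ← integral_comp_abs,
    restrict_compl_singleton]
  congr 1
  refine integral_congr_ae ?_
  filter_upwards [Measure.ae_ne volume (0 : ℝ)] with t ht
  have hs : |t| ^ (0 - 1 : ℝ) * Real.sign t = t⁻¹ := by
    rw [zero_sub, Real.rpow_neg_one]
    rcases ht.lt_or_gt with h | h
    · rw [abs_of_neg h, Real.sign_of_neg h, inv_neg, neg_mul_neg, mul_one]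
    · rw [abs_of_pos h, Real.sign_of_pos h, mul_one]
  simp only [gaussianTestFn, orbIntegrand, mul_assoc, hs, div_pow, mul_pow, sq_abs, inv_pow]
  field_simp

/-- Value at `s = 0` of the archimedean orbital integral: `e^{-2πζ}` for `ζ > 0`
and `0` for `ζ < 0`; in particular it depends only on `ζ = u₁u₂`. -/
theorem stmt4 (ζ u₁ u₂ : ℝ) (hu₁ : u₁ ≠ 0) (hu₂ : u₂ ≠ 0) (hu : u₁ * u₂ = ζ) :
    (0 < ζ → archOrb u₁ u₂ 0 = Real.exp (-(2 * Real.pi * ζ))) ∧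
    (ζ < 0 → archOrb u₁ u₂ 0 = 0) := by
  subst hu
  have hneg : ∫ t in Ioi 0, orbIntegrand u₁ u₂ t = -∫ t in Ioi 0, orbIntegrand (-u₁) (-u₂) t := by
    simp only [orbIntegrand_neg, integral_neg, neg_neg]
  rw [archOrb_zero]
  rcases hu₂.lt_or_gt with h₂ | h₂ <;> rcases hu₁.lt_or_gt with h₁ | h₁
  · refine ⟨fun _ => ?_, fun h => absurd h (mul_pos_of_neg_of_neg h₁ h₂).not_gt⟩
    rw [hneg, integral_orbIntegrand_of_pos (neg_pos.2 h₁) (neg_pos.2 h₂), Real.sign_of_neg h₁,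
      neg_mul_neg]
    ring
  · refine ⟨fun h => absurd h (mul_neg_of_pos_of_neg h₁ h₂).not_gt, fun _ => ?_⟩
    rw [hneg, integral_orbIntegrand_of_neg_of_pos (neg_neg_of_pos h₁) (neg_pos.2 h₂)]
    simp
  · refine ⟨fun h => absurd h (mul_neg_of_neg_of_pos h₁ h₂).not_gt, fun _ => ?_⟩
    rw [integral_orbIntegrand_of_neg_of_pos h₁ h₂]
    simp
  · refine ⟨fun _ => ?_, fun h => absurd h (mul_pos h₁ h₂).not_gt⟩
    rw [integral_orbIntegrand_of_pos h₁ h₂, Real.sign_of_pos h₁]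
    ring
end

section
/- Define φ' : ℝ × ℝ → ℝ by φ'(x, y) = ((x + y)/2)·e^{-π(x² + y²)}, and for r > 0 set Ei(-r) := -∫_r^∞ e^{-t}/t dt. Let ζ < 0 and choose u₁, u₂ ∈ ℝ, both nonzero, with u₁·u₂ = ζ. For s ∈ ℝ define Orb(ζ, φ', s) := sgn(u₁)·|u₁|^{-s} · ∫_{ℝ∖{0}} φ'(u₁·t⁻¹, t·u₂) · |t|^{s-1} · sgn(t) dt (Lebesgue measure). Then s ↦ Orb(ζ, φ', s) is differentiable at s = 0 with derivative ∂Orb(ζ, φ') = (1/2)·e^{-2πζ}·Ei(-4π|ζ|). -/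
open MeasureTheory

/-- The exponential integral `Ei(-r) = -∫_r^∞ e^{-t}/t dt` (for `r > 0`). -/
noncomputable def eiNeg (r : ℝ) : ℝ := -(∫ t in Set.Ioi r, Real.exp (-t) / t)

open Real Set Filter Topology

theorem sq_le_cosh_sq (x : ℝ) : x ^ 2 ≤ cosh x ^ 2 := by
  have h : |x| ≤ |sinh x| := by
    rw [abs_sinh]
    exact self_le_sinh_iff.2 (abs_nonneg x)
  have := sq_le_sq.2 h
  rw [cosh_sq]
  linarith

/-- Change of variables `y = sinh x` in a Gaussian integral. -/
theorem integrable_cosh_mul_exp_neg_sq {c : ℝ} (hc : 0 < c) :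
    Integrable (fun x : ℝ => cosh x * exp (-c * cosh x ^ 2)) := by
  have h := (integrableOn_image_iff_integrableOn_abs_deriv_smul (s := univ) (f := sinh)
    (f' := cosh) MeasurableSet.univ (fun x _ => (hasDerivAt_sinh x).hasDerivWithinAt)
    sinh_injective.injOn (fun y => exp (-c * y ^ 2))).1
    (integrable_exp_neg_mul_sq hc).integrableOn
  rw [integrableOn_univ] at h
  refine (h.const_mul (exp (-c))).congr (.of_forall fun x => ?_)
  simp only [smul_eq_mul, abs_of_pos (cosh_pos x), cosh_sq]
  rw [mul_left_comm, ← exp_add]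
  ring_nf

theorem integral_cosh_mul_exp_neg_sq (c : ℝ) :
    ∫ x : ℝ, cosh x * exp (-c * cosh x ^ 2) = exp (-c) * √(π / c) := by
  have h := integral_image_eq_integral_abs_deriv_smul (s := univ) (f := sinh)
    (f' := cosh) MeasurableSet.univ (fun x _ => (hasDerivAt_sinh x).hasDerivWithinAt)
    sinh_injective.injOn (fun y => exp (-c * y ^ 2))
  rw [image_univ, sinh_surjective.range_eq, setIntegral_univ, setIntegral_univ,
    integral_gaussian] at h
  rw [h, ← integral_const_mul]
  refine integral_congr_ae (.of_forall fun x => ?_)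
  simp only [smul_eq_mul, abs_of_pos (cosh_pos x), cosh_sq]
  rw [mul_left_comm, ← exp_add]
  ring_nf

theorem integral_Ioi_one_exp_neg_mul_sq_div {c : ℝ} (hc : 0 < c) :
    ∫ r in Ioi (1 : ℝ), exp (-c * r ^ 2) / r = (∫ t in Ioi c, exp (-t) / t) / 2 := by
  have h₁ := integral_comp_mul_left_Ioi' (fun t => exp (-t) / t) 1 hc
  have h₂ := integral_comp_rpow_Ioi_of_pos' (g := fun x => exp (-(c * x)) / x) two_pos zero_le_one
  rw [mul_one, smul_eq_mul, ← integral_const_mul] at h₁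
  rw [one_rpow] at h₂
  rw [← h₁, eq_div_iff two_ne_zero, ← integral_mul_const]
  refine Eq.trans (setIntegral_congr_fun measurableSet_Ioi fun r hr => ?_)
    (h₂.trans (setIntegral_congr_fun measurableSet_Ioi fun r hr => ?_))
  · have hr : 0 < r := one_pos.trans hr
    norm_num
    field_simp
  · have hr : 0 < r := one_pos.trans hr
    field_simp

/-- The tail of a Gaussian integral. -/
noncomputable def gaussianTail (c y : ℝ) : ℝ := ∫ w in Ioi y, exp (-c * w ^ 2)

theorem hasDerivAt_gaussianTail {c : ℝ} (hc : 0 < c) (y : ℝ) :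
    HasDerivAt (gaussianTail c) (-exp (-c * y ^ 2)) y := by
  have hint := integrable_exp_neg_mul_sq hc
  have hcont : Continuous fun w : ℝ => exp (-c * w ^ 2) := by fun_prop
  have h := (hcont.integral_hasStrictDerivAt 0 y).hasDerivAt.const_sub (gaussianTail c 0)
  refine h.congr_of_eventuallyEq (.of_forall fun z => ?_)
  have := intervalIntegral.integral_interval_add_Ioi (a := 0) (b := z) hint.integrableOn
    hint.integrableOn
  simp only [gaussianTail]
  linarith

theorem gaussianTail_nonneg (c y : ℝ) : 0 ≤ gaussianTail c y :=
  integral_nonneg fun _ => (exp_pos _).le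

theorem gaussianTail_le {c y : ℝ} (hc : 0 < c) (hy : 1 ≤ y) :
    gaussianTail c y ≤ exp (-c * y ^ 2) / (2 * c) := by
  have hint : Integrable fun x : ℝ => x * exp (-c * x ^ 2) := integrable_mul_exp_neg_mul_sq hc
  have hderiv (x : ℝ) :
      HasDerivAt (fun x => -(exp (-c * x ^ 2) / (2 * c))) (x * exp (-c * x ^ 2)) x := by
    have h := (((hasDerivAt_pow 2 x).const_mul (-c)).exp.div_const (2 * c)).neg
    refine h.congr_deriv ?_
    push_cast
    field_simp
  have hlim : Tendsto (fun x => -(exp (-c * x ^ 2) / (2 * c))) atTop (𝓝 0) := by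
    have h : Tendsto (fun x : ℝ => -c * x ^ 2) atTop atBot :=
      (tendsto_pow_atTop two_ne_zero).const_mul_atTop_of_neg (neg_lt_zero.2 hc)
    simpa using ((tendsto_exp_atBot.comp h).div_const (2 * c)).neg
  have heq := integral_Ioi_of_hasDerivAt_of_tendsto' (a := y) (fun x _ => hderiv x)
    hint.integrableOn hlim
  rw [zero_sub, neg_neg] at heq
  rw [← heq]
  refine setIntegral_mono_on (integrable_exp_neg_mul_sq hc).integrableOn hint.integrableOn
    measurableSet_Ioi fun x hx => ?_
  exact le_mul_of_one_le_left (exp_pos _).le (hy.trans (le_of_lt hx))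

theorem gaussianTail_cosh_le {c : ℝ} (hc : 0 < c) (x : ℝ) :
    gaussianTail c (cosh x) ≤ exp (-c * x ^ 2) / (2 * c) := by
  refine (gaussianTail_le hc (one_le_cosh x)).trans ?_
  have := mul_le_mul_of_nonneg_left (sq_le_cosh_sq x) hc.le
  gcongr ?_ / _
  exact exp_le_exp.2 (by linarith)

theorem gaussianTail_eq_integral_Ioi_one (c : ℝ) {y : ℝ} (hy : 0 < y) :
    gaussianTail c y = ∫ r in Ioi (1 : ℝ), y * exp (-(c * r ^ 2) * y ^ 2) := by
  have h := integral_comp_mul_left_Ioi' (fun w => exp (-c * w ^ 2)) 1 hy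
  rw [mul_one, smul_eq_mul, ← integral_const_mul] at h
  rw [gaussianTail, ← h]
  congr 1 with r
  ring_nf

theorem continuous_gaussianTail {c : ℝ} (hc : 0 < c) : Continuous (gaussianTail c) :=
  continuous_iff_continuousAt.2 fun y => (hasDerivAt_gaussianTail hc y).continuousAt

theorem integrable_gaussianTail_cosh {c : ℝ} (hc : 0 < c) :
    Integrable fun x => gaussianTail c (cosh x) := by
  refine ((integrable_exp_neg_mul_sq hc).div_const (2 * c)).mono'
    ((continuous_gaussianTail hc).comp continuous_cosh).aestronglyMeasurable
    (.of_forall fun x => ?_)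
  rw [norm_of_nonneg (gaussianTail_nonneg _ _)]
  exact gaussianTail_cosh_le hc x

theorem integrable_mul_gaussianTail_cosh {c : ℝ} (hc : 0 < c) :
    Integrable fun x => x * gaussianTail c (cosh x) := by
  refine ((integrable_mul_exp_neg_mul_sq hc).norm.div_const (2 * c)).mono'
    (continuous_id.mul ((continuous_gaussianTail hc).comp continuous_cosh)).aestronglyMeasurable
    (.of_forall fun x => ?_)
  rw [norm_mul, norm_mul, norm_of_nonneg (gaussianTail_nonneg _ _), norm_of_nonneg (exp_pos _).le,
    mul_div_assoc]
  gcongr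
  exact gaussianTail_cosh_le hc x

theorem integral_gaussianTail_cosh {c : ℝ} (hc : 0 < c) :
    ∫ x, gaussianTail c (cosh x) = √(π / c) * (∫ t in Ioi c, exp (-t) / t) / 2 := by
  have hslice (r : ℝ) (hr : r ∈ Ioi (1 : ℝ)) :
      ∫ x, cosh x * exp (-(c * r ^ 2) * cosh x ^ 2) = √(π / c) * (exp (-c * r ^ 2) / r) := by
    have hr : 0 < r := one_pos.trans hr
    rw [integral_cosh_mul_exp_neg_sq, ← div_div, sqrt_div' _ (sq_nonneg r), sqrt_sq hr.le, neg_mul]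
    ring
  have hbase : IntegrableOn (fun r : ℝ => exp (-c * r ^ 2) / r) (Ioi 1) := by
    refine (integrable_exp_neg_mul_sq hc).integrableOn.mono'
      (by fun_prop : Measurable _).aestronglyMeasurable ?_
    filter_upwards [ae_restrict_mem measurableSet_Ioi] with r hr
    have hr' : (1 : ℝ) ≤ r := le_of_lt hr
    rw [norm_of_nonneg (by positivity)]
    exact div_le_self (exp_pos _).le hr'
  have hint : Integrable
      (Function.uncurry fun x r : ℝ => cosh x * exp (-(c * r ^ 2) * cosh x ^ 2))
      (volume.prod (volume.restrict (Ioi 1))) := by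
    have hcont : Continuous
        (Function.uncurry fun x r : ℝ => cosh x * exp (-(c * r ^ 2) * cosh x ^ 2)) := by
      unfold Function.uncurry
      fun_prop
    refine (integrable_prod_iff' hcont.aestronglyMeasurable).2 ⟨?_, ?_⟩
    · filter_upwards [ae_restrict_mem measurableSet_Ioi] with r hr
      have hr : 0 < r := one_pos.trans hr
      exact integrable_cosh_mul_exp_neg_sq (c := c * r ^ 2) (by positivity)
    · refine (hbase.const_mul √(π / c)).congr ?_
      filter_upwards [ae_restrict_mem measurableSet_Ioi] with r hr
      rw [← hslice r hr]
      refine integral_congr_ae (.of_forall fun x => ?_)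
      exact (norm_of_nonneg (mul_nonneg (cosh_pos x).le (exp_pos _).le)).symm
  simp_rw [fun x => gaussianTail_eq_integral_Ioi_one c (cosh_pos x)]
  rw [integral_integral_swap hint, setIntegral_congr_fun measurableSet_Ioi hslice,
    integral_const_mul, integral_Ioi_one_exp_neg_mul_sq_div hc]
  ring

theorem integral_mul_sinh_mul_exp_neg_sq {c : ℝ} (hc : 0 < c)
    (hint : Integrable fun x : ℝ => x * (sinh x * exp (-c * cosh x ^ 2))) :
    ∫ x : ℝ, x * (sinh x * exp (-c * cosh x ^ 2)) =
      √(π / c) * (∫ t in Ioi c, exp (-t) / t) / 2 := by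
  have h := integral_mul_deriv_eq_deriv_mul_of_integrable (u := fun x : ℝ => x)
    (u' := fun _ => 1) (v := fun x => gaussianTail c (cosh x))
    (v' := fun x => -(sinh x * exp (-c * cosh x ^ 2))) (fun x _ => hasDerivAt_id x)
    (fun x _ => by
      exact ((hasDerivAt_gaussianTail hc (cosh x)).comp x (hasDerivAt_cosh x)).congr_deriv (by ring))
    (by simpa [Pi.mul_def] using hint.neg)
    (by simpa [Pi.mul_def] using integrable_gaussianTail_cosh hc)
    (integrable_mul_gaussianTail_cosh hc)
  simp only [mul_neg, integral_neg, one_mul, neg_inj] at h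
  rw [h, integral_gaussianTail_cosh hc]

/-- The orbital integral, rescaled to be symmetric under `v ↦ v⁻¹`, is a Mellin transform of this
kernel. -/
noncomputable def orbKernel (a v : ℝ) : ℝ := (v⁻¹ - v) * exp (-(π * a * (v ^ 2 + v⁻¹ ^ 2)))

theorem abs_orbKernel_inv (a v : ℝ) : |orbKernel a v⁻¹| = |orbKernel a v| := by
  simp only [orbKernel, inv_inv, abs_mul, abs_sub_comm v, add_comm (v⁻¹ ^ 2)]

theorem abs_orbKernel_le_inv {a v : ℝ} (ha : 0 < a) (hv : 0 < v) :
    |orbKernel a v| ≤ 2 / (π * a) * v⁻¹ := by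
  have hq : 0 < v ^ 2 + v⁻¹ ^ 2 := by positivity
  have hexp : exp (-(π * a * (v ^ 2 + v⁻¹ ^ 2))) ≤ (π * a * (v ^ 2 + v⁻¹ ^ 2))⁻¹ := by
    rw [exp_neg]
    gcongr
    linarith [add_one_le_exp (π * a * (v ^ 2 + v⁻¹ ^ 2))]
  have habs : |v⁻¹ - v| ≤ v⁻¹ + v := by
    have := inv_pos.2 hv
    rw [abs_le]
    constructor <;> linarith
  have hnum : v⁻¹ + v ≤ 2 * (v ^ 2 + v⁻¹ ^ 2) * v⁻¹ := by
    have h1 : v⁻¹ * v = 1 := inv_mul_cancel₀ hv.ne'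
    have h2 : v = v ^ 2 * v⁻¹ := by field_simp
    nth_rewrite 2 [h2]
    have : 1 + v ^ 2 ≤ 2 * (v ^ 2 + v⁻¹ ^ 2) := by
      nlinarith [sq_nonneg (v⁻¹ - v), sq_nonneg v⁻¹]
    nlinarith [inv_pos.2 hv]
  calc |orbKernel a v| = |v⁻¹ - v| * exp (-(π * a * (v ^ 2 + v⁻¹ ^ 2))) := by
        rw [orbKernel, abs_mul, abs_exp]
    _ ≤ (2 * (v ^ 2 + v⁻¹ ^ 2) * v⁻¹) * (π * a * (v ^ 2 + v⁻¹ ^ 2))⁻¹ := by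
        gcongr
        exact habs.trans hnum
    _ = 2 / (π * a) * v⁻¹ := by field_simp

theorem abs_orbKernel_le {a v : ℝ} (ha : 0 < a) (hv : 0 < v) :
    |orbKernel a v| ≤ 2 / (π * a) * v := by
  simpa [abs_orbKernel_inv] using abs_orbKernel_le_inv ha (inv_pos.2 hv)

theorem mellin_orbKernel {a : ℝ} (ha : 0 < a) :
    MellinConvergent (fun v => log v • (orbKernel a v : ℂ)) 0 ∧
      HasDerivAt (mellin fun v => (orbKernel a v : ℂ))
        (mellin (fun v => log v • (orbKernel a v : ℂ)) 0) 0 := by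
  refine mellin_hasDerivAt_of_isBigO_rpow (a := 1) (b := -1) ?_ ?_ (by simp) ?_ (by simp)
  · refine ContinuousOn.locallyIntegrableOn ?_ measurableSet_Ioi
    have hinv : ContinuousOn (fun v : ℝ => v⁻¹) (Ioi 0) :=
      continuousOn_inv₀.mono fun v hv => ne_of_gt hv
    unfold orbKernel
    exact Complex.continuous_ofReal.comp_continuousOn (by fun_prop)
  · refine Asymptotics.IsBigO.of_bound (2 / (π * a)) ?_
    filter_upwards [eventually_gt_atTop 0] with v hv
    rw [Complex.norm_real, norm_eq_abs, rpow_neg_one, norm_of_nonneg (inv_pos.2 hv).le]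
    exact abs_orbKernel_le_inv ha hv
  · refine Asymptotics.IsBigO.of_bound (2 / (π * a)) ?_
    filter_upwards [self_mem_nhdsWithin] with v hv
    rw [Complex.norm_real, norm_eq_abs, neg_neg, rpow_one, norm_of_nonneg (le_of_lt hv)]
    exact abs_orbKernel_le ha hv

theorem mellin_ofReal (f : ℝ → ℝ) (s : ℝ) :
    mellin (fun v => (f v : ℂ)) s = ((∫ v in Ioi 0, v ^ (s - 1) * f v : ℝ) : ℂ) := by
  rw [mellin, ← integral_complex_ofReal]
  refine setIntegral_congr_fun measurableSet_Ioi fun v hv => ?_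
  simp [Complex.ofReal_cpow (le_of_lt hv)]

theorem integral_Ioi_zero_eq_integral_exp (f : ℝ → ℝ) :
    ∫ v in Ioi 0, f v = ∫ x, exp x * f (exp x) := by
  have h := integral_image_eq_integral_abs_deriv_smul (s := univ) (f := exp)
    (f' := exp) MeasurableSet.univ (fun x _ => (hasDerivAt_exp x).hasDerivWithinAt)
    exp_injective.injOn f
  simpa [image_univ, range_exp] using h

theorem integrableOn_Ioi_zero_iff_integrable_exp (f : ℝ → ℝ) :
    IntegrableOn f (Ioi 0) ↔ Integrable fun x => exp x * f (exp x) := by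
  have h := integrableOn_image_iff_integrableOn_abs_deriv_smul (s := univ) (f := exp)
    (f' := exp) MeasurableSet.univ (fun x _ => (hasDerivAt_exp x).hasDerivWithinAt)
    exp_injective.injOn f
  simpa [image_univ, range_exp] using h

theorem orbKernel_exp (a x : ℝ) :
    orbKernel a (exp x) = -(2 * exp (2 * π * a)) * (sinh x * exp (-(4 * π * a) * cosh x ^ 2)) := by
  have h : -(π * a * (exp x ^ 2 + (exp x)⁻¹ ^ 2)) = 2 * π * a + -(4 * π * a) * cosh x ^ 2 := by
    rw [cosh_eq, exp_neg]
    field_simp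
    ring
  rw [orbKernel, h, exp_add, sinh_eq, exp_neg]
  ring

theorem integral_rpow_mul_orbKernel_zero (a : ℝ) :
    ∫ v in Ioi 0, v ^ ((0 : ℝ) - 1) * orbKernel a v = 0 := by
  rw [integral_Ioi_zero_eq_integral_exp]
  have hodd (x : ℝ) : exp x * (exp x ^ ((0 : ℝ) - 1) * orbKernel a (exp x)) =
      -(2 * exp (2 * π * a)) * (sinh x * exp (-(4 * π * a) * cosh x ^ 2)) := by
    rw [zero_sub, rpow_neg_one, mul_inv_cancel_left₀ (exp_pos x).ne', orbKernel_exp]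
  simp_rw [hodd]
  rw [integral_const_mul]
  have h := integral_neg_eq_self (fun x => sinh x * exp (-(4 * π * a) * cosh x ^ 2)) volume
  simp only [sinh_neg, cosh_neg, neg_mul, integral_neg] at h
  have : ∫ x, sinh x * exp (-(4 * π * a) * cosh x ^ 2) = 0 := by
    simp only [neg_mul]
    linarith
  rw [this, mul_zero]

theorem archOrb_eq {u₁ u₂ : ℝ} (hu : u₁ * u₂ < 0) (s : ℝ) :
    archOrb u₁ u₂ s = √|u₁ * u₂| * √|u₁ * u₂| ^ (-s) *
      ∫ v in Ioi 0, v ^ (s - 1) * orbKernel |u₁ * u₂| v := by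
  have hu₁ : u₁ ≠ 0 := by rintro rfl; simp at hu
  set p := √|u₁ * u₂|
  have hp : 0 < p := sqrt_pos.2 (abs_pos.2 hu.ne)
  have hpp : p ^ 2 = |u₁ * u₂| := sq_sqrt (abs_nonneg _)
  have hpp' : u₁ * u₂ = -p ^ 2 := by rw [hpp, abs_of_neg hu, neg_neg]
  have habs : 0 < |u₁| := abs_pos.2 hu₁
  have hsign : sign u₁ ^ 2 = 1 := by
    rcases sign_apply_eq_of_ne_zero u₁ hu₁ with h | h <;> simp [h]
  have hsa : sign u₁ * |u₁| = u₁ := by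
    rcases lt_or_gt_of_ne hu₁ with h | h
    · simp [sign_of_neg h, abs_of_neg h]
    · simp [sign_of_pos h, abs_of_pos h]
  have hfold : ∫ t in ({0}ᶜ : Set ℝ),
      gaussianTestFn (u₁ * t⁻¹) (t * u₂) * |t| ^ (s - 1) * sign t =
      2 * ∫ t in Ioi 0, gaussianTestFn (u₁ * t⁻¹) (t * u₂) * t ^ (s - 1) := by
    rw [restrict_compl_singleton, ← integral_comp_abs
      (f := fun t => gaussianTestFn (u₁ * t⁻¹) (t * u₂) * t ^ (s - 1))]
    congr 1 with t
    rcases lt_trichotomy t 0 with h | rfl | h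
    · simp only [sign_of_neg h, abs_of_neg h, gaussianTestFn, inv_neg, mul_neg, neg_mul, neg_sq]
      ring
    · simp [gaussianTestFn]
    · simp [sign_of_pos h, abs_of_pos h]
  have hscale := integral_comp_mul_left_Ioi'
    (fun t => gaussianTestFn (u₁ * t⁻¹) (t * u₂) * t ^ (s - 1)) 0 (div_pos habs hp)
  have hpoint (v : ℝ) (hv : v ∈ Ioi (0 : ℝ)) :
      gaussianTestFn (u₁ * (|u₁| / p * v)⁻¹) (|u₁| / p * v * u₂) * (|u₁| / p * v) ^ (s - 1) =
        sign u₁ * p / 2 * (|u₁| / p) ^ (s - 1) * (v ^ (s - 1) * orbKernel |u₁ * u₂| v) := by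
    have hv : 0 < v := hv
    have hx : u₁ * (|u₁| / p * v)⁻¹ = sign u₁ * p * v⁻¹ := by
      nth_rewrite 1 [← hsa]
      field_simp
    have hy : |u₁| / p * v * u₂ = -(sign u₁ * p * v) := by
      have : |u₁| * u₂ = -(sign u₁ * p ^ 2) := by
        have h : |u₁| = sign u₁ * u₁ := by
          nth_rewrite 3 [← hsa]
          linear_combination (-|u₁|) * hsign
        rw [h]
        linear_combination sign u₁ * hpp'
      field_simp
      linear_combination this
    rw [hx, hy, mul_rpow (by positivity) hv.le, gaussianTestFn, orbKernel, ← hpp]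
    have hq : (sign u₁ * p * v⁻¹) ^ 2 + (-(sign u₁ * p * v)) ^ 2 = p ^ 2 * (v ^ 2 + v⁻¹ ^ 2) := by
      linear_combination p ^ 2 * (v ^ 2 + v⁻¹ ^ 2) * hsign
    rw [hq, ← mul_assoc π]
    ring
  rw [mul_zero, setIntegral_congr_fun measurableSet_Ioi hpoint, integral_const_mul,
    smul_eq_mul] at hscale
  rw [archOrb, hfold, ← hscale, rpow_sub_one (div_pos habs hp).ne', div_rpow habs.le hp.le,
    rpow_neg habs.le, rpow_neg hp.le]
  have h1 : 0 < |u₁| ^ s := by positivity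
  have h2 : 0 < p ^ s := by positivity
  field_simp
  rw [hsign, one_mul]

theorem hasDerivAt_integral_orbKernel {a : ℝ} (ha : 0 < a) :
    HasDerivAt (fun s : ℝ => ∫ v in Ioi 0, v ^ (s - 1) * orbKernel a v)
      (∫ v in Ioi 0, v ^ ((0 : ℝ) - 1) * (log v * orbKernel a v)) 0 := by
  have h := (mellin_orbKernel ha).2
  have hlog := mellin_ofReal (fun v => log v * orbKernel a v) 0
  simp only [Complex.real_smul, ← Complex.ofReal_mul] at h
  rw [Complex.ofReal_zero] at hlog
  rw [hlog, ← Complex.ofReal_zero] at h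
  simpa only [mellin_ofReal, Complex.ofReal_re] using h.real_of_complex

theorem integrableOn_log_mul_orbKernel {a : ℝ} (ha : 0 < a) :
    IntegrableOn (fun v => v ^ ((0 : ℝ) - 1) * (log v * orbKernel a v)) (Ioi 0) := by
  refine IntegrableOn.congr_fun (mellin_orbKernel ha).1.re (fun v hv => ?_) measurableSet_Ioi
  have hcpow : (v : ℂ) ^ ((0 : ℂ) - 1) = ((v ^ ((0 : ℝ) - 1) : ℝ) : ℂ) := by
    rw [Complex.ofReal_cpow (le_of_lt hv)]
    simp
  simp only [hcpow, smul_eq_mul, Complex.real_smul, ← Complex.ofReal_mul]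
  exact Complex.ofReal_re _

theorem integral_log_mul_orbKernel {a : ℝ} (ha : 0 < a) :
    ∫ v in Ioi 0, v ^ ((0 : ℝ) - 1) * (log v * orbKernel a v) =
      -(2 * exp (2 * π * a)) *
        (√(π / (4 * π * a)) * (∫ t in Ioi (4 * π * a), exp (-t) / t) / 2) := by
  have hC : -(2 * exp (2 * π * a)) ≠ 0 := by simp [exp_ne_zero]
  have hint := (integrableOn_Ioi_zero_iff_integrable_exp _).1 (integrableOn_log_mul_orbKernel ha)
  have heq (x : ℝ) : exp x * (exp x ^ ((0 : ℝ) - 1) * (log (exp x) * orbKernel a (exp x))) =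
      -(2 * exp (2 * π * a)) * (x * (sinh x * exp (-(4 * π * a) * cosh x ^ 2))) := by
    rw [zero_sub, rpow_neg_one, mul_inv_cancel_left₀ (exp_pos x).ne', orbKernel_exp, log_exp]
    ring
  rw [integral_Ioi_zero_eq_integral_exp]
  simp only [heq] at hint ⊢
  rw [integral_const_mul, integral_mul_sinh_mul_exp_neg_sq (by positivity)]
  exact (integrable_const_mul_iff (isUnit_iff_ne_zero.2 hC) _).1 hint

/-- For `ζ < 0`, the archimedean orbital integral is differentiable at `s = 0`
with derivative `∂Orb(ζ, φ') = (1/2)·e^{-2πζ}·Ei(-4π|ζ|)`. -/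
theorem stmt5 (ζ u₁ u₂ : ℝ) (hu₁ : u₁ ≠ 0) (hu₂ : u₂ ≠ 0) (hu : u₁ * u₂ = ζ)
    (hζ : ζ < 0) :
    HasDerivAt (fun s : ℝ => archOrb u₁ u₂ s)
      ((1 / 2) * Real.exp (-(2 * Real.pi * ζ)) * eiNeg (4 * Real.pi * |ζ|)) 0 := by
  subst hu
  have ha : 0 < |u₁ * u₂| := abs_pos.2 hζ.ne
  have hsqrt : 0 < √|u₁ * u₂| := sqrt_pos.2 ha
  have hpow : HasDerivAt (fun s : ℝ => √|u₁ * u₂| * √|u₁ * u₂| ^ (-s)) _ 0 :=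
    ((hasDerivAt_neg (0 : ℝ)).const_rpow hsqrt).const_mul _
  have h := hpow.mul (hasDerivAt_integral_orbKernel ha)
  rw [integral_rpow_mul_orbKernel_zero, integral_log_mul_orbKernel ha, neg_zero, rpow_zero] at h
  have hroot : √(π / (4 * π * |u₁ * u₂|)) = 1 / (2 * √|u₁ * u₂|) := by
    have : π / (4 * π * |u₁ * u₂|) = (1 / (2 * √|u₁ * u₂|)) ^ 2 := by
      rw [div_pow, mul_pow, sq_sqrt ha.le]
      field_simp
      norm_num
    rw [this, sqrt_sq (by positivity)]
  have hexp : -(2 * π * (u₁ * u₂)) = 2 * π * |u₁ * u₂| := by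
    rw [abs_of_neg hζ]
    ring
  have hfun : (fun s : ℝ => archOrb u₁ u₂ s) = _ := funext fun s => archOrb_eq hζ s
  rw [hfun]
  refine h.congr_deriv ?_
  rw [hroot, hexp, eiNeg]
  field_simp
  ring
end

section
/- For every real β > 0, the improper integral ∫_0^∞ (t⁻² - β)·e^{-π(t⁻² + β²·t²)} dt converges and equals 0. -/
open MeasureTheory

/-- The substitution `t ↦ (β * t)⁻¹` on the positive half-line. -/
theorem integral_Ioi_comp_inv_mul (f : ℝ → ℝ) {β : ℝ} (hβ : 0 < β) :
    ∫ t in Set.Ioi (0 : ℝ), β⁻¹ * t⁻¹ ^ 2 * f (β * t)⁻¹ = ∫ t in Set.Ioi (0 : ℝ), f t := by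
  have himage : (fun t : ℝ => (β * t)⁻¹) '' Set.Ioi 0 = Set.Ioi 0 := by
    ext x
    constructor
    · rintro ⟨t, ht, rfl⟩
      exact inv_pos.mpr (mul_pos hβ ht)
    · intro hx
      refine ⟨(β * x)⁻¹, inv_pos.mpr (mul_pos hβ hx), ?_⟩
      have : x ≠ 0 := ne_of_gt hx
      field_simp
  have hinj : Set.InjOn (fun t : ℝ => (β * t)⁻¹) (Set.Ioi 0) := fun x _ y _ h =>
    mul_left_cancel₀ hβ.ne' (inv_injective h)
  have hderiv : ∀ t ∈ Set.Ioi (0 : ℝ), HasDerivWithinAt (fun t : ℝ => (β * t)⁻¹)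
      (-(β⁻¹ * t⁻¹ ^ 2)) (Set.Ioi 0) t := by
    intro t ht
    have ht0 : t ≠ 0 := ne_of_gt ht
    have h := ((hasDerivAt_id t).const_mul β).inv (mul_ne_zero hβ.ne' ht0)
    refine (h.congr_deriv ?_).hasDerivWithinAt
    simp only [id]
    field_simp
  have h := integral_image_eq_integral_abs_deriv_smul measurableSet_Ioi hderiv hinj f
  rw [himage] at h
  rw [h]
  refine setIntegral_congr_fun measurableSet_Ioi fun t _ => ?_
  have : 0 ≤ β⁻¹ * t⁻¹ ^ 2 := by positivity
  simp only [abs_neg, abs_of_nonneg this, smul_eq_mul]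

theorem abs_sub_mul_exp_neg_pi_mul_le {β u : ℝ} (hβ : 0 ≤ β) (hu : 0 ≤ u) :
    |u - β| * Real.exp (-(Real.pi * u)) ≤ 1 + β := by
  have habs : |u - β| ≤ u + β := abs_le.mpr ⟨by linarith, by linarith⟩
  have hexp : 1 + Real.pi * u ≤ Real.exp (Real.pi * u) := by
    linarith [Real.add_one_le_exp (Real.pi * u)]
  have hpi : u ≤ Real.pi * u := le_mul_of_one_le_left hu (by linarith [Real.pi_gt_three])
  rw [Real.exp_neg, ← div_eq_mul_inv, div_le_iff₀ (Real.exp_pos _)]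
  nlinarith [mul_nonneg hβ hu]

/-- For `β > 0`, the integral `∫_0^∞ (t⁻² - β)·e^{-π(t⁻² + β²t²)} dt` converges
and vanishes. -/
theorem stmt7 (β : ℝ) (hβ : 0 < β) :
    IntegrableOn
      (fun t : ℝ => (t⁻¹ ^ 2 - β) * Real.exp (-(Real.pi * (t⁻¹ ^ 2 + β ^ 2 * t ^ 2))))
      (Set.Ioi 0) ∧
    (∫ t in Set.Ioi (0 : ℝ),
        (t⁻¹ ^ 2 - β) * Real.exp (-(Real.pi * (t⁻¹ ^ 2 + β ^ 2 * t ^ 2)))) = 0 := by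
  constructor
  · have hgauss : Integrable fun t : ℝ => (1 + β) * Real.exp (-(Real.pi * β ^ 2) * t ^ 2) :=
      (integrable_exp_neg_mul_sq (by positivity)).const_mul _
    refine (hgauss.mono' (Measurable.aestronglyMeasurable (by fun_prop)) ?_).integrableOn
    refine Filter.Eventually.of_forall fun t => ?_
    have hsplit : Real.exp (-(Real.pi * (t⁻¹ ^ 2 + β ^ 2 * t ^ 2))) =
        Real.exp (-(Real.pi * t⁻¹ ^ 2)) * Real.exp (-(Real.pi * β ^ 2) * t ^ 2) := by
      rw [← Real.exp_add]
      ring_nf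
    rw [norm_mul, Real.norm_eq_abs, Real.norm_eq_abs, Real.abs_exp, hsplit, ← mul_assoc]
    exact mul_le_mul_of_nonneg_right
      (abs_sub_mul_exp_neg_pi_mul_le hβ.le (sq_nonneg _)) (Real.exp_pos _).le
  · have h := integral_Ioi_comp_inv_mul
      (fun t => (t⁻¹ ^ 2 - β) * Real.exp (-(Real.pi * (t⁻¹ ^ 2 + β ^ 2 * t ^ 2)))) hβ
    have hneg : ∀ t ∈ Set.Ioi (0 : ℝ),
        β⁻¹ * t⁻¹ ^ 2 * (((β * t)⁻¹⁻¹ ^ 2 - β) *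
          Real.exp (-(Real.pi * ((β * t)⁻¹⁻¹ ^ 2 + β ^ 2 * (β * t)⁻¹ ^ 2)))) =
        -((t⁻¹ ^ 2 - β) * Real.exp (-(Real.pi * (t⁻¹ ^ 2 + β ^ 2 * t ^ 2)))) := by
      intro t ht
      have ht0 : t ≠ 0 := ne_of_gt ht
      have hexponent : (β * t)⁻¹⁻¹ ^ 2 + β ^ 2 * (β * t)⁻¹ ^ 2 = t⁻¹ ^ 2 + β ^ 2 * t ^ 2 := by
        field_simp
        ring
      have hfactor : β⁻¹ * t⁻¹ ^ 2 * ((β * t)⁻¹⁻¹ ^ 2 - β) = -(t⁻¹ ^ 2 - β) := by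
        field_simp
        ring
      rw [hexponent, ← mul_assoc, hfactor, neg_mul]
    rw [setIntegral_congr_fun measurableSet_Ioi hneg, integral_neg] at h
    linarith
end

section
/- Let a > 0 and α, s₀ ∈ ℝ. For R > 0 define g(R) = Ei(-2πaR) = -∫_{2πaR}^∞ e^{-t}/t dt. Then g is twice differentiable on (0, ∞) and for every R > 0 one has R·(α + R)·g''(R) + (α + (s₀ + 1)·R)·g'(R) = (s₀ - 2πa·(α + R))·e^{-2πaR}. -/
open MeasureTheory

/-- `g(R) = Ei(-2πaR) = -∫_{2πaR}^∞ e^{-t}/t dt`, the radial profile of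
Kudla's Green function. -/
noncomputable def kudlaG (a R : ℝ) : ℝ :=
  -(∫ t in Set.Ioi (2 * Real.pi * a * R), Real.exp (-t) / t)

/-- The integrand `e^{-t}/t` of the exponential integral is integrable away from `0`. -/
lemma integrableOn_exp_neg_div_Ioi {r : ℝ} (hr : 0 < r) :
    IntegrableOn (fun t : ℝ => Real.exp (-t) / t) (Set.Ioi r) := by
  refine ((integrableOn_exp_neg_Ioi r).div_const r).mono' ?_ ?_
  · exact (by fun_prop : Measurable fun t : ℝ => Real.exp (-t) / t).aestronglyMeasurable
  · filter_upwards [ae_restrict_mem measurableSet_Ioi] with t ht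
    have ht' : r < t := ht
    have h0 : 0 < t := hr.trans ht'
    rw [Real.norm_of_nonneg (by positivity)]
    gcongr

lemma hasDerivAt_integral_exp_neg_div_Ioi {r : ℝ} (hr : 0 < r) :
    HasDerivAt (fun x : ℝ => ∫ t in Set.Ioi x, Real.exp (-t) / t) (-(Real.exp (-r) / r)) r := by
  have hcont : ContinuousOn (fun t : ℝ => Real.exp (-t) / t) (Set.Ioi 0) :=
    (by fun_prop : Continuous fun t : ℝ => Real.exp (-t)).continuousOn.div continuousOn_id
      fun t ht => ne_of_gt ht
  have hderiv := (intervalIntegral.integral_hasDerivAt_right (a := r) (b := r)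
    (f := fun t : ℝ => Real.exp (-t) / t) (by simp)
    (hcont.stronglyMeasurableAtFilter isOpen_Ioi r hr)
    (hcont.continuousAt (Ioi_mem_nhds hr))).const_sub (∫ t in Set.Ioi r, Real.exp (-t) / t)
  refine hderiv.congr_of_eventuallyEq ?_
  filter_upwards [Ioi_mem_nhds hr] with x hx
  rw [← intervalIntegral.integral_Ioi_sub_Ioi' (integrableOn_exp_neg_div_Ioi hr)
    (integrableOn_exp_neg_div_Ioi hx)]
  ring

lemma hasDerivAt_kudlaG {a R : ℝ} (ha : 0 < a) (hR : 0 < R) :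
    HasDerivAt (kudlaG a) (Real.exp (-(2 * Real.pi * a * R)) / R) R := by
  have hc : 0 < 2 * Real.pi * a := by positivity
  have h := ((hasDerivAt_integral_exp_neg_div_Ioi (mul_pos hc hR)).comp R
    ((hasDerivAt_id R).const_mul (2 * Real.pi * a))).neg
  refine h.congr_deriv ?_
  field_simp

lemma hasDerivAt_deriv_kudlaG {a R : ℝ} (ha : 0 < a) (hR : 0 < R) :
    HasDerivAt (deriv (kudlaG a))
      (-(2 * Real.pi * a * R + 1) * Real.exp (-(2 * Real.pi * a * R)) / R ^ 2) R := by
  have h := (((hasDerivAt_id R).const_mul (2 * Real.pi * a)).neg.exp).div (hasDerivAt_id R) hR.ne'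
  refine (h.congr_deriv ?_).congr_of_eventuallyEq ?_
  · simp only [id, Pi.neg_apply]
    ring
  · filter_upwards [Ioi_mem_nhds hR] with x hx
    exact (hasDerivAt_kudlaG ha hx).deriv

/-- For `a > 0` and real parameters `α, s₀`, the function `g(R) = Ei(-2πaR)` is
twice differentiable on `(0,∞)` and satisfies the radial differential identity
`R(α+R)·g'' + (α+(s₀+1)R)·g' = (s₀ - 2πa(α+R))·e^{-2πaR}`. -/
theorem stmt10 (a : ℝ) (ha : 0 < a) (α s₀ : ℝ) :
    (∀ R : ℝ, 0 < R → DifferentiableAt ℝ (kudlaG a) R) ∧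
    (∀ R : ℝ, 0 < R → DifferentiableAt ℝ (deriv (kudlaG a)) R) ∧
    (∀ R : ℝ, 0 < R →
      R * (α + R) * deriv (deriv (kudlaG a)) R
          + (α + (s₀ + 1) * R) * deriv (kudlaG a) R
        = (s₀ - 2 * Real.pi * a * (α + R)) * Real.exp (-(2 * Real.pi * a * R))) := by
  refine ⟨fun R hR => (hasDerivAt_kudlaG ha hR).differentiableAt,
    fun R hR => (hasDerivAt_deriv_kudlaG ha hR).differentiableAt, fun R hR => ?_⟩
  rw [(hasDerivAt_deriv_kudlaG ha hR).deriv, (hasDerivAt_kudlaG ha hR).deriv]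
  field_simp
  ring
end

section
/- Let F be a field, σ : F → F a ring automorphism with σ ∘ σ = id, and n ≥ 1. Let γ be an n×n matrix over F such that γ · γ^σ = 1, where γ^σ denotes the matrix obtained by applying σ to each entry of γ. Then γ is invertible, its characteristic polynomial α := charpoly(γ) is monic of degree n with α(0) ≠ 0, and α satisfies α = α(0) · reverse(α^σ); equivalently, α(t) = α(0) · tⁿ · (α^σ)(t⁻¹), i.e. α lies in F[t]°_{deg n}. -/
open Polynomial

/-- Let `σ` be an involutive ring automorphism of a field `F` and let `γ` be an
`n×n` matrix with `γ·γ^σ = 1`.  Then `γ` is invertible and its characteristic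
polynomial `α` is monic of degree `n`, has `α(0) ≠ 0`, and satisfies
`α = α(0)·reverse(α^σ)`, i.e. `α ∈ F[t]°_{deg n}`. -/
theorem stmt12 (F : Type*) [Field F] (σ : F ≃+* F) (hσ : ∀ x, σ (σ x) = x)
    (n : ℕ) (hn : 1 ≤ n) (γ : Matrix (Fin n) (Fin n) F)
    (hγ : γ * γ.map σ = 1) :
    IsUnit γ ∧ γ.charpoly.Monic ∧ γ.charpoly.natDegree = n ∧
      γ.charpoly.eval 0 ≠ 0 ∧
      γ.charpoly
        = Polynomial.C (γ.charpoly.eval 0) * (γ.charpoly.map (σ : F →+* F)).reverse := by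
  have hu : IsUnit γ := .of_mul_eq_one _ hγ
  have hu' : IsUnit (γ.map σ) := .of_mul_eq_one_right _ hγ
  have hrev : γ.charpoly =
      C ((-1) ^ n * (γ.map σ).det⁻¹) * (γ.map σ).charpolyRev := by
    have h := Matrix.charpoly_inv (γ.map σ) hu'
    rw [Matrix.inv_eq_left_inv hγ] at h
    simpa using h
  have heval : γ.charpoly.eval 0 = (-1) ^ n * (γ.map σ).det⁻¹ := by
    rw [hrev, eval_mul, eval_C, Matrix.eval_charpolyRev, mul_one]
  have hdet : (γ.map σ).det ≠ 0 := ((Matrix.isUnit_iff_isUnit_det _).mp hu').ne_zero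
  refine ⟨hu, γ.charpoly_monic, by simp, ?_, ?_⟩
  · rw [heval]
    exact mul_ne_zero (pow_ne_zero _ (neg_ne_zero.mpr one_ne_zero)) (inv_ne_zero hdet)
  · rw [heval, ← Matrix.charpoly_map, Matrix.reverse_charpoly]
    exact hrev
end

section
/- Let F be a field, σ : F → F a ring automorphism with σ ∘ σ = id, and n ≥ 1. Let J be an invertible n×n matrix over F that is σ-hermitian, i.e. (J^σ)ᵀ = J, where J^σ denotes entrywise application of σ and ᵀ denotes transpose. Let g be an n×n matrix over F with (g^σ)ᵀ · J · g = J. Then g is invertible, its characteristic polynomial α := charpoly(g) is monic of degree n with α(0) ≠ 0, and α satisfies α = α(0) · reverse(α^σ); equivalently, α(t) = α(0) · tⁿ · (α^σ)(t⁻¹), i.e. α lies in F[t]°_{deg n}. -/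
open Polynomial Matrix

/-- If `h * J * g = J` with `J` invertible, then `g` is conjugate to `h⁻¹`, so its characteristic
polynomial is the normalized reverse of that of `h`. -/
theorem charpoly_eq_C_mul_reverse_of_mul_mul_eq {F ι : Type*} [Field F] [Fintype ι]
    [DecidableEq ι] {h J g : Matrix ι ι F} (hJ : IsUnit J) (hg : h * J * g = J) :
    g.charpoly = C (g.charpoly.eval 0) * h.charpoly.reverse := by
  have hJdet : J.det ≠ 0 := ((Matrix.isUnit_iff_isUnit_det J).mp hJ).ne_zero
  obtain ⟨u, rfl⟩ := hJ
  have hmul : h * (u.val * g * u.val⁻¹) = 1 := by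
    rw [← mul_assoc, ← mul_assoc, hg, ← Matrix.coe_units_inv, Units.mul_inv]
  have hdet : h.det * g.det = 1 := by
    have := congrArg Matrix.det hg
    rw [Matrix.det_mul, Matrix.det_mul] at this
    exact mul_right_cancel₀ hJdet (by linear_combination this)
  have heval : g.charpoly.eval 0 = (-1) ^ Fintype.card ι * h.det⁻¹ := by
    rw [← eq_inv_of_mul_eq_one_right hdet, Matrix.eval_charpoly]
    simp [Matrix.det_neg]
  rw [heval, Matrix.reverse_charpoly, ← Matrix.charpoly_units_conj u g,
    ← Matrix.inv_eq_right_inv hmul,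
    Matrix.charpoly_inv h (IsUnit.of_mul_eq_one _ hmul)]
  simp

/-- Let `σ` be an involutive ring automorphism of a field `F`, let `J` be an
invertible σ-hermitian `n×n` matrix (`(J^σ)ᵀ = J`), and let `g` satisfy
`(g^σ)ᵀ·J·g = J` (i.e. `g` is an isometry of the hermitian form with Gram
matrix `J`).  Then `g` is invertible and its characteristic polynomial `α` is
monic of degree `n`, has `α(0) ≠ 0`, and satisfies `α = α(0)·reverse(α^σ)`,
i.e. `α ∈ F[t]°_{deg n}`. -/
theorem stmt13 (F : Type*) [Field F] (σ : F ≃+* F) (hσ : ∀ x, σ (σ x) = x)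
    (n : ℕ) (hn : 1 ≤ n) (J g : Matrix (Fin n) (Fin n) F)
    (hJ : IsUnit J) (hJherm : (J.map σ)ᵀ = J)
    (hg : (g.map σ)ᵀ * J * g = J) :
    IsUnit g ∧ g.charpoly.Monic ∧ g.charpoly.natDegree = n ∧
      g.charpoly.eval 0 ≠ 0 ∧
      g.charpoly
        = Polynomial.C (g.charpoly.eval 0) * (g.charpoly.map (σ : F →+* F)).reverse := by
  have hJdet : J.det ≠ 0 := ((Matrix.isUnit_iff_isUnit_det J).mp hJ).ne_zero
  have hgdet : g.det ≠ 0 := fun h0 => hJdet (by rw [← hg, Matrix.det_mul, h0, mul_zero])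
  refine ⟨(Matrix.isUnit_iff_isUnit_det g).mpr hgdet.isUnit, g.charpoly_monic,
    by simp, ?_, ?_⟩
  · rw [Matrix.eval_charpoly]
    simpa [Matrix.det_neg] using hgdet
  · have hchar := charpoly_eq_C_mul_reverse_of_mul_mul_eq hJ hg
    rw [Matrix.charpoly_transpose] at hchar
    rwa [← Matrix.charpoly_map]
end

section
/- Let F be a field, σ : F → F a ring automorphism with σ ∘ σ = id, and let α ∈ F[t] be a monic irreducible polynomial of degree n ≥ 1 with α(0) ≠ 0 satisfying α = α(0) · reverse(α^σ), where α^σ is obtained by applying σ to the coefficients and reverse(p) = tⁿ·p(t⁻¹). Let E := F[t]/(α) be the quotient field and let θ denote the image of t in E (so θ ≠ 0, hence θ is invertible in E). Then there exists a ring automorphism τ : E → E such that τ(ι(x)) = ι(σ(x)) for all x ∈ F (where ι : F → E is the canonical embedding) and τ(θ) = θ⁻¹; moreover τ ∘ τ = id. -/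
open Polynomial

/-- Let `σ` be an involutive ring automorphism of a field `F` and let
`α ∈ F[t]` be monic irreducible of degree `n ≥ 1` with `α(0) ≠ 0` and
`α = α(0)·reverse(α^σ)` (i.e. `α ∈ F[t]°_{deg n}`).  Then on the quotient field
`E = F[t]/(α)` there is a ring automorphism `τ` extending `σ`, sending the
distinguished root `θ` of `α` to `θ⁻¹`, and satisfying `τ ∘ τ = id`. -/
theorem stmt14 (F : Type*) [Field F] (σ : F ≃+* F) (hσ : ∀ x, σ (σ x) = x)
    (n : ℕ) (hn : 1 ≤ n) (α : Polynomial F) [Fact (Irreducible α)]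
    (hmonic : α.Monic) (hdeg : α.natDegree = n) (h0 : α.eval 0 ≠ 0)
    (hsym : α = Polynomial.C (α.eval 0) * (α.map (σ : F →+* F)).reverse) :
    ∃ τ : AdjoinRoot α ≃+* AdjoinRoot α,
      (∀ x : F, τ (AdjoinRoot.of α x) = AdjoinRoot.of α (σ x)) ∧
      τ (AdjoinRoot.root α) = (AdjoinRoot.root α)⁻¹ ∧
      (∀ y, τ (τ y) = y) := by
  have hθ : AdjoinRoot.root α ≠ 0 := by
    intro h
    have hev := AdjoinRoot.eval₂_root α
    rw [h, eval₂_at_zero, ← AdjoinRoot.algebraMap_eq, map_eq_zero,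
      coeff_zero_eq_eval_zero] at hev
    exact h0 hev
  have hrev : (α.map (σ : F →+* F)).reverse.eval₂ (AdjoinRoot.of α) (AdjoinRoot.root α) = 0 := by
    have hev : (C (α.eval 0) * (α.map (σ : F →+* F)).reverse).eval₂ (AdjoinRoot.of α)
        (AdjoinRoot.root α) = 0 := hsym ▸ AdjoinRoot.eval₂_root α
    rw [eval₂_mul, eval₂_C, mul_eq_zero, ← AdjoinRoot.algebraMap_eq, map_eq_zero] at hev
    exact hev.resolve_left h0
  have hinv : α.eval₂ ((AdjoinRoot.of α).comp (σ : F →+* F)) (AdjoinRoot.root α)⁻¹ = 0 := by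
    rw [← eval₂_map]
    let _ : Invertible (AdjoinRoot.root α)⁻¹ := invertibleOfNonzero (inv_ne_zero hθ)
    rw [← eval₂_reverse_eq_zero_iff, invOf_eq_inv, inv_inv]
    exact hrev
  let f : AdjoinRoot α →+* AdjoinRoot α := AdjoinRoot.lift _ _ hinv
  have hof (x : F) : f (AdjoinRoot.of α x) = AdjoinRoot.of α (σ x) := AdjoinRoot.lift_of hinv
  have hroot : f (AdjoinRoot.root α) = (AdjoinRoot.root α)⁻¹ := AdjoinRoot.lift_root hinv
  have hff : f.comp f = RingHom.id _ := by
    apply AdjoinRoot.ringHom_ext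
    · ext x
      simp [hof, hσ]
    · simp [hroot]
  exact ⟨RingEquiv.ofRingHom f f hff hff, hof, hroot, RingHom.congr_fun hff⟩
end
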